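/- Let G be a finite simple graph and let e be an edge of G such that G − e is the disjoint union of two subgraphs A and B with v(A) ≥ 3 and λ(A) = ⌊v(A)/3⌋. Let s be an integer, where either s = 3 and v(A) ≠ 5, or s ≥ 4. If λ(B) ≥ v(B)/(s+1), then λ(G) ≥ v(G)/(s+1). -/

import Mathlib

/-- `H` is a path with `k` edges (a "k-edge path"), as a subgraph of `G`. -/
def SimpleGraph.Subgraph.IsKEdgePath {V : Type*} {G : SimpleGraph V}
    (H : G.Subgraph) (k : ℕ) : Prop :=
  ∃ (u v : V) (w : G.Walk u v), w.IsPath ∧ w.length = k ∧ H = w.toSubgraph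

/-- `H` is a tree with `k` edges (a "k-edge tree"), as a subgraph of `G`. -/
def SimpleGraph.Subgraph.IsKEdgeTree {V : Type*} {G : SimpleGraph V}
    (H : G.Subgraph) (k : ℕ) : Prop :=
  H.coe.IsTree ∧ H.edgeSet.ncard = k

/-- The maximum number of pairwise vertex-disjoint `k`-edge paths in `G`. -/
noncomputable def SimpleGraph.lambdaK {V : Type*} (G : SimpleGraph V) (k : ℕ) : ℕ :=
  sSup {n | ∃ P : Finset G.Subgraph,
    (∀ H ∈ P, H.IsKEdgePath k) ∧
    (P : Set G.Subgraph).Pairwise (fun H H' => Disjoint H.verts H'.verts) ∧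
    P.card = n}

/-- The maximum number of pairwise vertex-disjoint `k`-edge trees in `G`. -/
noncomputable def SimpleGraph.tauK {V : Type*} (G : SimpleGraph V) (k : ℕ) : ℕ :=
  sSup {n | ∃ P : Finset G.Subgraph,
    (∀ H ∈ P, H.IsKEdgeTree k) ∧
    (P : Set G.Subgraph).Pairwise (fun H H' => Disjoint H.verts H'.verts) ∧
    P.card = n}

theorem aux_bdd {V : Type} [Finite V] (G : SimpleGraph V) (k : ℕ) :
    BddAbove {n | ∃ P : Finset G.Subgraph,
    (∀ H ∈ P, H.IsKEdgePath k) ∧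
    (P : Set G.Subgraph).Pairwise (fun H H' => Disjoint H.verts H'.verts) ∧
    P.card = n} := by
  classical
  have := Fintype.ofFinite G.Subgraph
  refine ⟨Fintype.card G.Subgraph, ?_⟩
  rintro n ⟨P, -, -, rfl⟩
  exact Finset.card_le_univ P

theorem aux_attain {V : Type} [Finite V] (G : SimpleGraph V) (k : ℕ) :
    ∃ P : Finset G.Subgraph,
    (∀ H ∈ P, H.IsKEdgePath k) ∧
    (P : Set G.Subgraph).Pairwise (fun H H' => Disjoint H.verts H'.verts) ∧
    P.card = G.lambdaK k :=
  Nat.sSup_mem (s := {n | ∃ P : Finset G.Subgraph,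
    (∀ H ∈ P, H.IsKEdgePath k) ∧
    (P : Set G.Subgraph).Pairwise (fun H H' => Disjoint H.verts H'.verts) ∧
    P.card = n}) ⟨0, ∅, by simp⟩ (aux_bdd G k)

theorem aux_nonempty {V : Type} {G : SimpleGraph V} {k : ℕ} {H : G.Subgraph}
    (h : H.IsKEdgePath k) : H.verts.Nonempty := by
  obtain ⟨u, v, w, -, -, rfl⟩ := h
  exact ⟨u, by simp⟩

theorem aux_push {V W : Type} [Finite V] [Finite W] {G : SimpleGraph V} {G' : SimpleGraph W}
    (f : G →g G') (hf : Function.Injective f) (k : ℕ) :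
    ∃ P : Finset G'.Subgraph,
    (∀ H ∈ P, H.IsKEdgePath k) ∧ (∀ H ∈ P, H.verts ⊆ Set.range f) ∧
    (P : Set G'.Subgraph).Pairwise (fun H H' => Disjoint H.verts H'.verts) ∧
    P.card = G.lambdaK k := by
  classical
  obtain ⟨P, h1, h2, h3⟩ := aux_attain G k
  have hd : ∀ H ∈ P, ∀ K ∈ P, H ≠ K → Disjoint (H.map f).verts (K.map f).verts := by
    intro H hH K hK hne
    exact (Set.disjoint_image_iff hf).2 (h2 hH hK hne)
  refine ⟨P.image (fun H => H.map f), ?_, ?_, ?_, ?_⟩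
  · intro H hH
    obtain ⟨K, hK, rfl⟩ := Finset.mem_image.1 hH
    obtain ⟨u, v, w, hw, hl, rfl⟩ := h1 K hK
    exact ⟨_, _, w.map f, SimpleGraph.Walk.map_isPath_of_injective hf hw, by simpa using hl,
      by simp [SimpleGraph.Walk.toSubgraph_map]⟩
  · intro H hH
    obtain ⟨K, hK, rfl⟩ := Finset.mem_image.1 hH
    exact Set.image_subset_range _ _
  · intro H hH K hK hne
    obtain ⟨H, hH', rfl⟩ := Finset.mem_image.1 hH
    obtain ⟨K, hK', rfl⟩ := Finset.mem_image.1 hK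
    exact hd H hH' K hK' (fun h => hne (by rw [h]))
  · rw [← h3]
    apply Finset.card_image_of_injOn
    intro H hH K hK heq
    by_contra hne
    have := hd H hH K hK hne
    simp only at heq
    rw [← heq, disjoint_self] at this
    obtain ⟨x, hx⟩ := aux_nonempty (h1 H hH)
    have hx' : f x ∈ (H.map f).verts := Set.mem_image_of_mem f hx
    rw [this] at hx'
    exact hx'

theorem aux_add {V : Type} [Finite V] (G G' : SimpleGraph V) (hle : G' ≤ G) (A B : Set V)
    (hdisj : Disjoint A B) (k : ℕ) :
    (G'.induce A).lambdaK k + (G'.induce B).lambdaK k ≤ G.lambdaK k := by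
  classical
  let f (S : Set V) : G'.induce S →g G := ⟨Subtype.val, fun h => hle h⟩
  have hf (S : Set V) : Function.Injective (f S) := Subtype.val_injective
  have hr (S : Set V) : Set.range (f S) = S := Subtype.range_coe
  obtain ⟨P, p1, p2, p3, p4⟩ := aux_push (f A) (hf A) k
  obtain ⟨Q, q1, q2, q3, q4⟩ := aux_push (f B) (hf B) k
  rw [hr] at p2 q2
  have hPQ : ∀ H ∈ P, ∀ K ∈ Q, Disjoint H.verts K.verts := fun H hH K hK =>
    hdisj.mono (p2 H hH) (q2 K hK)
  refine le_csSup (aux_bdd G k) ⟨P ∪ Q, ?_, ?_, ?_⟩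
  · intro H hH
    rcases Finset.mem_union.1 hH with h | h
    exacts [p1 H h, q1 H h]
  · intro H hH K hK hne
    rcases Finset.mem_union.1 hH with h | h <;> rcases Finset.mem_union.1 hK with h' | h'
    exacts [p3 h h' hne, hPQ _ h _ h', (hPQ _ h' _ h).symm, q3 h h' hne]
  · rw [Finset.card_union_of_disjoint, p4, q4]
    rw [Finset.disjoint_left]
    intro H hH hH'
    have := hPQ H hH H hH'
    rw [disjoint_self] at this
    exact (aux_nonempty (p1 H hH)).ne_empty this

/-- Let `G` be a finite simple graph and `e` an edge of `G` such that `G − e` is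
the disjoint union of two subgraphs `A` and `B` with `v(A) ≥ 3` and
`λ(A) = ⌊v(A)/3⌋`.  Let `s` be an integer, where either `s = 3` and `v(A) ≠ 5`,
or `s ≥ 4`.  If `λ(B) ≥ v(B)/(s+1)`, then `λ(G) ≥ v(G)/(s+1)`. -/
theorem stmt_10 {V : Type} [Fintype V] [DecidableEq V]
    (G : SimpleGraph V) (e : Sym2 V) (he : e ∈ G.edgeSet)
    (A B : Finset V) (hunion : A ∪ B = Finset.univ) (hdisj : Disjoint A B)
    (hsep : ∀ a ∈ A, ∀ b ∈ B, ¬ (G.deleteEdges {e}).Adj a b)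
    (hA3 : 3 ≤ A.card)
    (hlamA : ((G.deleteEdges {e}).induce (A : Set V)).lambdaK 2 = A.card / 3)
    (s : ℕ) (hs : (s = 3 ∧ A.card ≠ 5) ∨ 4 ≤ s)
    (hB : (((G.deleteEdges {e}).induce (B : Set V)).lambdaK 2 : ℚ) ≥ (B.card : ℚ) / (s + 1)) :
    (G.lambdaK 2 : ℚ) ≥ (Fintype.card V : ℚ) / (s + 1) := by
  have h := aux_add G (G.deleteEdges {e}) (SimpleGraph.deleteEdges_le _) (A : Set V) (B : Set V)
    (by exact_mod_cast hdisj) 2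
  rw [hlamA] at h
  have hc : Fintype.card V = A.card + B.card := by
    rw [← Finset.card_univ, ← hunion, Finset.card_union_of_disjoint hdisj]
  have hpos : (0 : ℚ) < s + 1 := by positivity
  have hA : A.card ≤ A.card / 3 * (s + 1) := by
    rcases hs with ⟨rfl, h5⟩ | h4
    · omega
    · calc A.card ≤ A.card / 3 * 5 := by omega
        _ ≤ _ := Nat.mul_le_mul_left _ (by omega)
  have hA' : (A.card : ℚ) ≤ ((A.card / 3 : ℕ) : ℚ) * (s + 1) := by exact_mod_cast hA
  have h' : (((A.card / 3 : ℕ) : ℚ)) +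
      (((G.deleteEdges {e}).induce (B : Set V)).lambdaK 2 : ℚ) ≤ (G.lambdaK 2 : ℚ) := by
    exact_mod_cast h
  rw [ge_iff_le, div_le_iff₀ hpos] at hB ⊢
  rw [hc]
  rw [Nat.cast_add]
  nlinarith [mul_le_mul_of_nonneg_right h' hpos.le]
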